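/- Consider the 2-step LIMM method with stability polynomial (1 − (2/3)z)ζ² − (4/3)ζ + 1/3. Then its roots tend to 0 as z → −∞ along the real axis: for every ε > 0 there exists M > 0 such that for every real z < −M, every ζ ∈ ℂ with (1 − (2/3)z)ζ² − (4/3)ζ + 1/3 = 0 satisfies |ζ| < ε. -/

import Mathlib

/-!
A root `ζ` of `ρ - z σ` with `σ = c ζ ^ k` satisfies `z c = ρ(ζ) / ζ ^ k`. If `deg ρ ≤ k`, the
right-hand side is a polynomial in `ζ⁻¹`, hence bounded on `‖ζ‖ ≥ ε`. So a root outside the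
`ε`-ball forces `z` to stay bounded, in whatever direction `z` is taken to infinity.
-/

section StabilityPolynomial

open Polynomial

/-- The stability polynomial `ρ - z σ` of a linear multistep method with generating polynomials
`ρ` and `σ`, as a polynomial in `ζ`, for the test equation `y' = λ y` with `z = h λ`. -/
noncomputable def stabilityPolynomial {R : Type*} [CommRing R] (ρ σ : R[X]) (z : R) : R[X] :=
  ρ - C z * σ

theorem isRoot_stabilityPolynomial_iff {R : Type*} [CommRing R] {ρ σ : R[X]} {z ζ : R} :
    (stabilityPolynomial ρ σ z).IsRoot ζ ↔ ρ.eval ζ = z * σ.eval ζ := by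
  simp [stabilityPolynomial, sub_eq_zero]

variable {𝕜 : Type*} [NormedField 𝕜] {ρ : 𝕜[X]} {k : ℕ} {c z ζ : 𝕜} {ε : ℝ}

theorem norm_eval_le_mul_norm_pow (hρ : ρ.natDegree ≤ k) (hε : 0 < ε) (hζ : ε ≤ ‖ζ‖) :
    ‖ρ.eval ζ‖ ≤ (∑ i ∈ Finset.range (k + 1), ‖ρ.coeff i‖ / ε ^ (k - i)) * ‖ζ‖ ^ k := by
  have pow_le : ∀ i ≤ k, ‖ζ‖ ^ i ≤ ‖ζ‖ ^ k / ε ^ (k - i) := fun i hi ↦ by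
    rw [le_div_iff₀ (pow_pos hε _)]
    calc ‖ζ‖ ^ i * ε ^ (k - i) ≤ ‖ζ‖ ^ i * ‖ζ‖ ^ (k - i) := by gcongr
      _ = ‖ζ‖ ^ k := pow_mul_pow_sub _ hi
  rw [eval_eq_sum_range' (Nat.lt_succ_of_le hρ), Finset.sum_mul]
  refine norm_sum_le_of_le _ fun i hi ↦ ?_
  calc ‖ρ.coeff i * ζ ^ i‖ = ‖ρ.coeff i‖ * ‖ζ‖ ^ i := by rw [norm_mul, norm_pow]
    _ ≤ ‖ρ.coeff i‖ * (‖ζ‖ ^ k / ε ^ (k - i)) := by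
      gcongr
      exact pow_le i (Finset.mem_range_succ_iff.mp hi)
    _ = ‖ρ.coeff i‖ / ε ^ (k - i) * ‖ζ‖ ^ k := by ring

theorem norm_lt_of_isRoot_stabilityPolynomial (hρ : ρ.natDegree ≤ k) (hε : 0 < ε)
    (hz : ∑ i ∈ Finset.range (k + 1), ‖ρ.coeff i‖ / ε ^ (k - i) < ‖z * c‖)
    (hroot : (stabilityPolynomial ρ (C c * X ^ k) z).IsRoot ζ) : ‖ζ‖ < ε := by
  by_contra! hζ
  have eval_eq : ρ.eval ζ = z * c * ζ ^ k := by
    simpa [mul_assoc] using isRoot_stabilityPolynomial_iff.mp hroot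
  have norm_pow_pos : 0 < ‖ζ‖ ^ k := pow_pos (hε.trans_le hζ) k
  have mul_le := norm_eval_le_mul_norm_pow hρ hε hζ
  rw [eval_eq, norm_mul, norm_pow] at mul_le
  exact hz.not_ge (le_of_mul_le_mul_right mul_le norm_pow_pos)

theorem exists_forall_isRoot_stabilityPolynomial_norm_lt (hρ : ρ.natDegree ≤ k) (hc : c ≠ 0)
    (hε : 0 < ε) :
    ∃ M : ℝ, 0 < M ∧ ∀ z : 𝕜, M < ‖z‖ → ∀ ζ : 𝕜,
      (stabilityPolynomial ρ (C c * X ^ k) z).IsRoot ζ → ‖ζ‖ < ε := by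
  set S := ∑ i ∈ Finset.range (k + 1), ‖ρ.coeff i‖ / ε ^ (k - i)
  refine ⟨max (S / ‖c‖) 1, by positivity, fun z hz ζ ↦
    norm_lt_of_isRoot_stabilityPolynomial hρ hε ?_⟩
  rw [norm_mul, ← div_lt_iff₀ (norm_pos_iff.mpr hc)]
  exact (le_max_left _ _).trans_lt hz

/-- The generating polynomial `ρ` of the 2-step LIMM method of order two, with coefficients
`α₋₁ = 1`, `α₀ = -4/3`, `α₁ = 1/3`. -/
noncomputable def limm2Rho : ℂ[X] := X ^ 2 - C (4 / 3) * X + C (1 / 3)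

/-- The generating polynomial `σ` of the 2-step LIMM method of order two. Its coefficients are
the sums `βᵢ + μᵢ`, of which only `β₋₁ + μ₋₁ = 2/3` is nonzero. -/
noncomputable def limm2Sigma : ℂ[X] := C (2 / 3) * X ^ 2

theorem natDegree_limm2Rho_le : limm2Rho.natDegree ≤ 2 := by
  unfold limm2Rho
  compute_degree

theorem isRoot_stabilityPolynomial_limm2_iff {z ζ : ℂ} :
    (stabilityPolynomial limm2Rho limm2Sigma z).IsRoot ζ ↔
      (1 - 2 / 3 * z) * ζ ^ 2 - 4 / 3 * ζ + 1 / 3 = 0 := by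
  have eval_eq : (stabilityPolynomial limm2Rho limm2Sigma z).eval ζ =
      (1 - 2 / 3 * z) * ζ ^ 2 - 4 / 3 * ζ + 1 / 3 := by
    simp only [stabilityPolynomial, limm2Rho, limm2Sigma, eval_sub, eval_add, eval_mul, eval_pow,
      eval_X, eval_C]
    ring
  rw [IsRoot.def, eval_eq]

end StabilityPolynomial

theorem limm2_roots_tendsto_zero_general :
    ∀ ε : ℝ, 0 < ε → ∃ M : ℝ, 0 < M ∧ ∀ z : ℂ, M < ‖z‖ → ∀ ζ : ℂ,
      (1 - 2 / 3 * z) * ζ ^ 2 - 4 / 3 * ζ + 1 / 3 = 0 → ‖ζ‖ < ε := by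
  intro ε hε
  obtain ⟨M, hM, norm_lt⟩ := exists_forall_isRoot_stabilityPolynomial_norm_lt
    natDegree_limm2Rho_le (c := 2 / 3) (by norm_num) hε
  exact ⟨M, hM, fun z hz ζ hζ ↦ norm_lt z hz ζ (isRoot_stabilityPolynomial_limm2_iff.mpr hζ)⟩

/-- L-stability-type root decay for the 2-step fixed-stepsize LIMM method of order
two: all roots of the stability polynomial `(1 - (2/3) z) ζ² - (4/3) ζ + 1/3` tend
to `0` as `z → -∞` along the real axis. -/
theorem limm2_roots_tendsto_zero :
    ∀ ε : ℝ, 0 < ε → ∃ M : ℝ, 0 < M ∧ ∀ z : ℝ, z < -M → ∀ ζ : ℂ,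
      (1 - (2 / 3 : ℂ) * (z : ℂ)) * ζ ^ 2 - (4 / 3 : ℂ) * ζ + 1 / 3 = 0 → ‖ζ‖ < ε := by
  intro ε hε
  obtain ⟨M, hM, norm_lt⟩ := limm2_roots_tendsto_zero_general ε hε
  exact ⟨M, hM, fun z hz ↦ norm_lt z (by simpa using lt_abs.mpr (.inr (lt_neg_of_lt_neg hz)))⟩
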